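/- arXiv:1608.08155 — 2 statements merged into one kernel-verified Lean document; each statement's English description precedes it below -/
import Mathlib

section
/- Let (R, m) be an unmixed Noetherian local ring of dimension d which is an image of a Cohen-Macaulay local ring, let x = x_1, ..., x_d be a system of parameters of R, and let S be an S_2-ification of R. Then (x)^lim = (x)^lim_S ∩ R, where (x)^lim_S denotes the limit closure of the sequence x in S regarded as an R-module. -/
/-!
The conductor-like ideal `I = ⋂ D(s)`, with `s` running over finitely many generators of `S`,
multiplies `S` into `R`, and every prime containing it has height at least two; in cohomological
terms `dim S/R ≤ d - 2`, so `H^d_m(R) → H^d_m(S)` is injective.  The proof makes this injectivity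
elementary.

If `y = y₁, …, y_d` is a system of parameters with `y₁, y₂ ∈ I`, then each `∏_{j ≠ i} y_j` lies
in `I`, so a relation `r = ∑ y_i s_i` with `s_i ∈ S` becomes, after multiplication by `∏ y_j`, a
relation `(∏ y_j) r ∈ (y_i²)R` (`conductor_step`).  Such `y` exist inside any given power of the
parameter ideal by prime avoidance (`exists_parameters`).

To pass from `x` to `y` and back, put `z = x^{n+1}` and choose matrices with `y = A z` and
`z^N = B y²`.  By Cramer's rule, determinants of transition matrices carry `(z)M` into `(y)M`.
The composite `B diag(y) A` and `diag(z^{N-1})` both send `z` to `z^N`, and by `det_sub_det_mem`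
the determinants of two such matrices agree up to the limit closure of `z^N`.  Hence
multiplication by the first determinant can be replaced by multiplication by `(∏ z_i)^{N-1}`.
-/

open IsLocalRing

set_option synthInstance.maxHeartbeats 1000000
set_option maxHeartbeats 1000000

/-- The limit closure `(x)^lim_M = ⋃_{n>0} ((x₁^{n+1}, …, x_r^{n+1})M :_M (x₁⋯x_r)^n)` of a
sequence `x = x₁, …, x_r` of elements of `R` in the `R`-module `M`; the union of the
increasing family of submodules is expressed as a supremum. -/
def limitClosure {R : Type*} [CommRing R] {M : Type*} [AddCommGroup M] [Module R M]
    {r : ℕ} (x : Fin r → R) : Submodule R M :=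
  ⨆ n : ℕ, (Ideal.span (Set.range fun i => x i ^ (n + 2)) • (⊤ : Submodule R M)).comap
    (LinearMap.lsmul R M ((∏ i, x i) ^ (n + 1)))

/-- The dimension of a module `M`: the Krull dimension of `R ⧸ Ann M`. -/
noncomputable def moduleDim (R M : Type*) [CommRing R] [AddCommGroup M] [Module R M] :
    WithBot ℕ∞ :=
  ringKrullDim (R ⧸ Module.annihilator R M)

/-- A system of parameters of a Noetherian local ring `R` of dimension `t`: a sequence of `t`
elements of the maximal ideal generating an ideal primary to the maximal ideal. -/
def IsSOP (R : Type*) [CommRing R] [IsLocalRing R] {t : ℕ} (x : Fin t → R) : Prop :=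
  (∀ i, x i ∈ maximalIdeal R) ∧ (Ideal.span (Set.range x)).radical = maximalIdeal R

/-- A Noetherian local ring `(R, m)` is unmixed if `dim R̂/P = dim R̂` for every associated
prime `P` of the `m`-adic completion `R̂` of `R`. -/
def IsUnmixedLocalRing (R : Type*) [CommRing R] [IsLocalRing R] : Prop :=
  ∀ P ∈ associatedPrimes (AdicCompletion (maximalIdeal R) R)
      (AdicCompletion (maximalIdeal R) R),
    ringKrullDim ((AdicCompletion (maximalIdeal R) R) ⧸ P) =
      ringKrullDim (AdicCompletion (maximalIdeal R) R)

/-- A (Noetherian, local) ring is Cohen–Macaulay if it admits a regular sequence whose length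
equals its Krull dimension. -/
def IsCohenMacaulayRing (A : Type*) [CommRing A] : Prop :=
  ∃ rs : List A, RingTheory.Sequence.IsRegular A rs ∧
    (rs.length : WithBot ℕ∞) = ringKrullDim A

/-- Serre's condition `S₂` for an `R`-module `N`: for every prime `p`, the depth of the
localization `N_p` over `R_p` is at least `min (2, dim N_p)`, expressed via the existence of
regular sequences in the maximal ideal of `R_p`. -/
def HasSerreS2 (R N : Type*) [CommRing R] [AddCommGroup N] [Module R N] : Prop :=
  ∀ (p : PrimeSpectrum R) (n : ℕ),
    (n : WithBot ℕ∞) ≤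
        min 2 (moduleDim (Localization.AtPrime p.asIdeal)
          (LocalizedModule p.asIdeal.primeCompl N)) →
      ∃ rs : List (Localization.AtPrime p.asIdeal),
        rs.length = n ∧ (∀ c ∈ rs, c ∈ maximalIdeal (Localization.AtPrime p.asIdeal)) ∧
        RingTheory.Sequence.IsRegular (LocalizedModule p.asIdeal.primeCompl N) rs

/-- For an element `s` of the total quotient ring of `R`, the ideal
`D(s) = {r ∈ R : r·s ∈ R}`. -/
def denominatorIdeal (R : Type*) [CommRing R] (s : FractionRing R) : Ideal R :=
  (LinearMap.range (Algebra.linearMap R (FractionRing R))).comap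
    (LinearMap.toSpanSingleton R (FractionRing R) s)

open Matrix

/-! ### Membership in limit closures -/

theorem mem_span_range_smul_top {R M : Type*} [CommRing R] [AddCommGroup M] [Module R M]
    {d : ℕ} (z : Fin d → R) (m : M) :
    m ∈ Ideal.span (Set.range z) • (⊤ : Submodule R M) ↔ ∃ s : Fin d → M, m = ∑ i, z i • s i := by
  constructor
  · intro h
    induction h using Submodule.smul_induction_on' with
    | smul a ha b _ =>
      obtain ⟨c, hc⟩ := Ideal.mem_span_range_iff_exists_fun.1 ha
      refine ⟨fun i => c i • b, ?_⟩
      rw [← hc, Finset.sum_smul]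
      exact Finset.sum_congr rfl fun i _ => by rw [mul_comm, mul_smul]
    | add a _ b _ h1 h2 =>
      obtain ⟨s, rfl⟩ := h1
      obtain ⟨t, rfl⟩ := h2
      exact ⟨s + t, by simp [Finset.sum_add_distrib]⟩
  · rintro ⟨s, rfl⟩
    exact Submodule.sum_mem _ fun i _ =>
      Submodule.smul_mem_smul (Ideal.subset_span ⟨i, rfl⟩) trivial

theorem mem_limitClosure {R M : Type*} [CommRing R] [AddCommGroup M] [Module R M]
    {d : ℕ} (x : Fin d → R) (m : M) :
    m ∈ limitClosure x ↔
      ∃ n : ℕ, ∃ s : Fin d → M, (∏ i, x i) ^ (n + 1) • m = ∑ i, x i ^ (n + 2) • s i := by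
  unfold limitClosure
  rw [Submodule.mem_iSup_of_directed]
  · refine exists_congr fun n => ?_
    rw [Submodule.mem_comap, mem_span_range_smul_top]
    rfl
  · refine (monotone_nat_of_le_succ fun n => ?_).directed_le
    intro m hm
    rw [Submodule.mem_comap, mem_span_range_smul_top] at hm ⊢
    obtain ⟨s, hs⟩ := hm
    refine ⟨fun i => (∏ j ∈ Finset.univ.erase i, x j) • s i, ?_⟩
    simp only [LinearMap.lsmul_apply] at hs ⊢
    rw [pow_succ', mul_smul, hs, Finset.smul_sum]
    refine Finset.sum_congr rfl fun i _ => ?_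
    rw [smul_smul, smul_smul, ← Finset.mul_prod_erase _ _ (Finset.mem_univ i)]
    congr 1
    ring

/-! ### Determinants of transition matrices -/

/-- Changing a single row of a matrix sending `z` to `w`, without changing its value on `z`,
changes the determinant by an element of `(w₁², …, w_d²) : ∏ w_i`. -/
theorem det_sub_det_updateRow_mem {R : Type*} [CommRing R] {d : ℕ} (z w : Fin d → R)
    (E : Matrix (Fin d) (Fin d) R) (hE : E *ᵥ z = w) (a : Fin d) (v : Fin d → R)
    (hv : v ⬝ᵥ z = w a) :
    (∏ i, w i) * (E.det - (E.updateRow a v).det) ∈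
      Ideal.span (Set.range fun i => w i ^ 2) := by
  set F := E.updateRow a (E a - v) with hF
  have hdet : E.det - (E.updateRow a v).det = F.det := by
    have h := Matrix.det_updateRow_add E a (E a - v) v
    rw [sub_add_cancel, Matrix.updateRow_eq_self] at h
    rw [h, add_sub_cancel_right]
  have hFz : F *ᵥ z = Function.update w a 0 := by
    ext i
    by_cases hi : i = a
    · subst hi
      have : E i ⬝ᵥ z = w i := congrFun hE i
      rw [Matrix.mulVec, hF, Matrix.updateRow_self, sub_dotProduct, this, hv]
      simp
    · simp [hF, Matrix.mulVec, hi]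
      exact congrFun hE i
  have hadj : F.det • z = F.adjugate *ᵥ Function.update w a 0 := by
    rw [← hFz, Matrix.mulVec_mulVec, Matrix.adjugate_mul, Matrix.smul_mulVec, Matrix.one_mulVec]
  have hwa : w a * F.det = (E a ᵥ* F.adjugate) ⬝ᵥ Function.update w a 0 := by
    rw [← Matrix.dotProduct_mulVec, ← hadj, dotProduct_smul, smul_eq_mul, mul_comm]
    congr 1
    exact (congrFun hE a).symm
  rw [hdet, ← Finset.prod_erase_mul _ _ (Finset.mem_univ a), mul_assoc, hwa, dotProduct,
    Finset.mul_sum]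
  refine Ideal.sum_mem _ fun j _ => ?_
  by_cases hj : j = a
  · subst hj
    simp
  · rw [Function.update_of_ne hj,
      ← Finset.mul_prod_erase _ _ (Finset.mem_erase.2 ⟨hj, Finset.mem_univ j⟩)]
    have : ∀ p q : R, w j * p * (q * w j) = (p * q) * w j ^ 2 := fun p q => by ring
    rw [this]
    exact Ideal.mul_mem_left _ _ (Ideal.subset_span ⟨j, rfl⟩)

/-- The determinants of two matrices sending `z` to the same `w` agree up to an element of the
limit closure of `w`. -/
theorem det_sub_det_mem {R : Type*} [CommRing R] {d : ℕ} (z w : Fin d → R)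
    (C D : Matrix (Fin d) (Fin d) R) (hC : C *ᵥ z = w) (hD : D *ᵥ z = w) :
    (∏ i, w i) * (C.det - D.det) ∈ Ideal.span (Set.range fun i => w i ^ 2) := by
  -- The rows of `C` are replaced by those of `D` one at a time.
  have key : ∀ t : Finset (Fin d), ∃ E : Matrix (Fin d) (Fin d) R, E *ᵥ z = w ∧
      (∀ i ∈ t, E i = D i) ∧
      (∏ i, w i) * (C.det - E.det) ∈ Ideal.span (Set.range fun i => w i ^ 2) := by
    intro t
    induction t using Finset.induction_on with
    | empty => exact ⟨C, hC, by simp, by simp⟩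
    | insert a t ha ih =>
      obtain ⟨E, hE, hr, hm⟩ := ih
      have hDa : D a ⬝ᵥ z = w a := congrFun hD a
      refine ⟨E.updateRow a (D a), ?_, ?_, ?_⟩
      · ext i
        by_cases hi : i = a
        · subst hi
          simpa [Matrix.mulVec] using hDa
        · simp only [Matrix.mulVec, ne_eq, hi, not_false_eq_true, Matrix.updateRow_ne]
          exact congrFun hE i
      · intro i hi
        by_cases hia : i = a
        · subst hia
          simp
        · rw [Matrix.updateRow_ne hia]
          exact hr i ((Finset.mem_insert.1 hi).resolve_left hia)
      · have := Ideal.add_mem _ hm (det_sub_det_updateRow_mem z w E hE a (D a) hDa)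
        rw [← mul_add] at this
        simpa using this
  obtain ⟨E, -, hr, hm⟩ := key Finset.univ
  have : E = D := funext fun i => hr i (Finset.mem_univ i)
  rwa [this] at hm

/-- Cramer's rule: if `y = A z`, then `det A` carries `(z)M` into `(y)M`. -/
theorem det_smul_sum {R M : Type*} [CommRing R] [AddCommGroup M] [Module R M] {d : ℕ}
    (A : Matrix (Fin d) (Fin d) R) (z y : Fin d → R) (hA : A *ᵥ z = y) (s : Fin d → M) :
    ∃ t : Fin d → M, A.det • ∑ i, z i • s i = ∑ i, y i • t i := by
  have hadj : A.det • z = A.adjugate *ᵥ y := by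
    rw [← hA, Matrix.mulVec_mulVec, Matrix.adjugate_mul, Matrix.smul_mulVec, Matrix.one_mulVec]
  refine ⟨fun j => ∑ i, A.adjugate i j • s i, ?_⟩
  simp only [Finset.smul_sum, smul_smul]
  rw [Finset.sum_comm]
  refine Finset.sum_congr rfl fun i _ => ?_
  have : A.det * z i = ∑ j, A.adjugate i j * y j := congrFun hadj i
  rw [this, Finset.sum_smul]
  exact Finset.sum_congr rfl fun j _ => by rw [mul_comm]

/-- If `(y) ⊆ (z)`, a transition matrix from `z` to `y` exists. -/
theorem exists_matrix {R : Type*} [CommRing R] {d : ℕ} (z y : Fin d → R)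
    (h : ∀ i, y i ∈ Ideal.span (Set.range z)) :
    ∃ A : Matrix (Fin d) (Fin d) R, A *ᵥ z = y := by
  choose c hc using fun i => Ideal.mem_span_range_iff_exists_fun.1 (h i)
  exact ⟨c, funext hc⟩

/-! ### Parameters in prescribed ideals -/

/-- Prime avoidance: if every prime over `J k` has height at least `k + 1` for `k < d`, one can
choose `y i ∈ J i` for `i < k` so that every prime over `(y_0, …, y_{k-1})` has height at least `k`. -/
theorem exists_parameters {R : Type*} [CommRing R] [IsNoetherianRing R] {d : ℕ}
    (J : ℕ → Ideal R)
    (hJ : ∀ k < d, ∀ p : PrimeSpectrum R, J k ≤ p.asIdeal → ((k + 1 : ℕ) : ℕ∞) ≤ Order.height p)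
    (k : ℕ) (hk : k ≤ d) :
    ∃ y : Fin k → R, (∀ i : Fin k, y i ∈ J i) ∧ ∀ p : PrimeSpectrum R,
      Ideal.span (Set.range y) ≤ p.asIdeal → (k : ℕ∞) ≤ Order.height p := by
  induction k with
  | zero => exact ⟨Fin.elim0, fun i => i.elim0, by simp⟩
  | succ k ih =>
    obtain ⟨y, hy, hp⟩ := ih (by omega)
    set K := Ideal.span (Set.range y)
    have hfin : {p ∈ K.minimalPrimes | ¬ J k ≤ p}.Finite :=
      (Ideal.finite_minimalPrimes_of_isNoetherianRing R K).subset (Set.sep_subset _ _)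
    have havoid : ¬ ((J k : Set R) ⊆ ⋃ p ∈ (hfin.toFinset : Set (Ideal R)), (p : Set R)) := by
      rw [Ideal.subset_union_prime (f := fun p : Ideal R => p) ⊥ ⊥]
      · rintro ⟨p, hp1, hp2⟩
        exact ((hfin.mem_toFinset).1 hp1).2 hp2
      · intro p hp1 _ _
        exact ((hfin.mem_toFinset).1 hp1).1.1.1
    obtain ⟨a, haJ, ha⟩ := Set.not_subset.1 havoid
    refine ⟨Fin.snoc y a, ?_, ?_⟩
    · intro i
      refine Fin.lastCases ?_ (fun i => ?_) i
      · simpa using haJ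
      · simpa using hy i
    · intro q hq
      have hKq : K ≤ q.asIdeal := by
        refine le_trans (Ideal.span_mono ?_) hq
        rintro _ ⟨i, rfl⟩
        exact ⟨i.castSucc, by simp⟩
      have haq : a ∈ q.asIdeal := hq (Ideal.subset_span ⟨Fin.last k, by simp⟩)
      have := q.isPrime
      obtain ⟨p, hpm, hpq⟩ := Ideal.exists_minimalPrimes_le hKq
      have hpp : p.IsPrime := hpm.1.1
      by_cases hJp : J k ≤ p
      · exact hJ k (by omega) q (hJp.trans hpq)
      · have hap : a ∉ p := fun h => ha (Set.mem_biUnion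
          (show p ∈ (hfin.toFinset : Set (Ideal R)) from hfin.mem_toFinset.2 ⟨hpm, hJp⟩) h)
        have hlt : (⟨p, hpp⟩ : PrimeSpectrum R) < q := by
          refine lt_of_le_of_ne hpq ?_
          rintro rfl
          exact hap haq
        have h1 := hp ⟨p, hpp⟩ hpm.1.2
        have h2 := Order.height_add_one_le hlt
        push_cast
        exact le_trans (by gcongr) h2

/-! ### The conductor -/

/-- If every `∏_{j ≠ i} y_j` is in an ideal `I` with `I S ⊆ R`, then `r ∈ (y)S ∩ R` implies `(∏ y_j) r ∈ (y_i²)R`. -/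
theorem conductor_step {R S : Type*} [CommRing R] [CommRing S] [Algebra R S]
    (hinj : Function.Injective (algebraMap R S)) {d : ℕ} (I : Ideal R)
    (hI : ∀ a ∈ I, ∀ s : S, ∃ b : R, algebraMap R S b = a • s) (y : Fin d → R)
    (hy : ∀ i, ∏ j ∈ Finset.univ.erase i, y j ∈ I) (r : R) (s : Fin d → S)
    (hr : algebraMap R S r = ∑ i, y i • s i) :
    ∃ t : Fin d → R, (∏ i, y i) * r = ∑ i, y i ^ 2 * t i := by
  choose t ht using fun i => hI _ (hy i) (s i)
  refine ⟨t, hinj ?_⟩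
  rw [map_mul, hr, map_sum, Finset.mul_sum]
  refine Finset.sum_congr rfl fun i _ => ?_
  rw [map_mul, ht, ← Algebra.smul_def, ← Algebra.smul_def, smul_smul, smul_smul,
    ← Finset.mul_prod_erase _ _ (Finset.mem_univ i)]
  congr 1
  ring

/-- The intersection of the denominator ideals of finitely many generators of `S` multiplies `S`
into `R`, and still has height at least two. -/
theorem exists_conductor {R : Type*} [CommRing R] (S : Subalgebra R (FractionRing R))
    (hfin : Module.Finite R S)
    (hheight : ∀ s : FractionRing R, s ∈ S →
      s ∉ Set.range (algebraMap R (FractionRing R)) →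
      ∀ p : PrimeSpectrum R, denominatorIdeal R s ≤ p.asIdeal → 2 ≤ Order.height p) :
    ∃ I : Ideal R, (∀ a ∈ I, ∀ s : S, ∃ b : R, algebraMap R S b = a • s) ∧
      ∀ p : PrimeSpectrum R, I ≤ p.asIdeal → 2 ≤ Order.height p := by
  obtain ⟨T, hT⟩ := hfin.fg_top
  refine ⟨T.inf fun s => denominatorIdeal R (s : FractionRing R), ?_, ?_⟩
  · intro a ha s
    have hs : s ∈ Submodule.span R (T : Set S) := hT ▸ trivial
    induction hs using Submodule.span_induction with
    | mem s hs =>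
      have h : a ∈ denominatorIdeal R (s : FractionRing R) :=
        (Finset.inf_le (f := fun s : S => denominatorIdeal R (s : FractionRing R)) hs) ha
      obtain ⟨b, hb⟩ := h
      exact ⟨b, Subtype.ext hb⟩
    | zero => exact ⟨0, by simp⟩
    | add u v _ _ hu hv =>
      obtain ⟨b, hb⟩ := hu
      obtain ⟨c, hc⟩ := hv
      exact ⟨b + c, by rw [map_add, hb, hc, smul_add]⟩
    | smul c u _ hu =>
      obtain ⟨b, hb⟩ := hu
      exact ⟨c * b, by rw [map_mul, hb, ← Algebra.smul_def, smul_comm]⟩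
  · intro p hp
    obtain ⟨s, -, hs⟩ := (Ideal.IsPrime.inf_le' p.isPrime).1 hp
    refine hheight s s.2 ?_ p hs
    rintro ⟨b, hb⟩
    -- For `s ∈ R` the denominator ideal is the unit ideal.
    refine p.isPrime.ne_top ((Ideal.eq_top_iff_one _).2 (hs ?_))
    exact ⟨b, by simpa using hb⟩

theorem height_closedPoint {R : Type*} [CommRing R] [IsLocalRing R] {d : ℕ}
    (hdim : ringKrullDim R = d) : Order.height (closedPoint R) = d := by
  have h := IsLocalRing.maximalIdeal_height_eq_ringKrullDim (R := R)
  rw [hdim, show maximalIdeal R = (closedPoint R).asIdeal from rfl,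
    PrimeSpectrum.height_eq_orderHeight] at h
  exact_mod_cast h

/-- The descent step: an element of `(z)S ∩ R` is multiplied by some
`(∏ z_i)^{2K+1}` into the ideal generated by the `z_i^{2K+2}` in `R`, when `z` is a system of parameters. -/
theorem descent {R S : Type*} [CommRing R] [IsNoetherianRing R] [IsLocalRing R] {d : ℕ}
    (hdim : ringKrullDim R = d) [CommRing S] [Algebra R S]
    (hinj : Function.Injective (algebraMap R S)) (I : Ideal R)
    (hI : ∀ a ∈ I, ∀ s : S, ∃ b : R, algebraMap R S b = a • s)
    (hIht : ∀ p : PrimeSpectrum R, I ≤ p.asIdeal → 2 ≤ Order.height p)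
    (z : Fin d → R) (hz : (Ideal.span (Set.range z)).radical = maximalIdeal R)
    (r : R) (s : Fin d → S) (hr : algebraMap R S r = ∑ i, z i • s i) :
    ∃ K : ℕ, ∃ t : Fin d → R, (∏ i, z i) ^ (2 * K + 1) * r = ∑ i, z i ^ (2 * K + 2) * t i := by
  have hm := height_closedPoint hdim
  set Q := Ideal.span (Set.range z) with hQ
  have hQp : ∀ p : PrimeSpectrum R, Q ≤ p.asIdeal → p = closedPoint R := by
    intro p hp
    refine PrimeSpectrum.ext (le_antisymm (IsLocalRing.le_maximalIdeal p.isPrime.ne_top) ?_)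
    exact hz.symm.le.trans (p.isPrime.radical_le_iff.2 hp)
  obtain ⟨y, hyJ, hyp⟩ := exists_parameters (d := d) (fun k => if k < 2 then I * Q else Q) (by
    intro k hk p hp
    have hQcase : Q ≤ p.asIdeal → ((k + 1 : ℕ) : ℕ∞) ≤ Order.height p := by
      intro h
      rw [hQp p h, hm]
      exact_mod_cast hk
    by_cases h2 : k < 2
    · simp only [h2, if_true] at hp
      rcases p.isPrime.mul_le.1 hp with h | h
      · refine le_trans ?_ (hIht p h)
        exact_mod_cast h2
      · exact hQcase h
    · simp only [h2, if_false] at hp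
      exact hQcase hp) d le_rfl
  have hyQ : ∀ i, y i ∈ Q := by
    intro i
    have := hyJ i
    split_ifs at this
    · exact (Ideal.mul_le_right : I * Q ≤ Q) this
    · exact this
  have hyI : ∀ i : Fin d, (i : ℕ) < 2 → y i ∈ I := by
    intro i hi
    have := hyJ i
    rw [if_pos hi] at this
    exact (Ideal.mul_le_left : I * Q ≤ I) this
  have hprod : ∀ i, ∏ j ∈ Finset.univ.erase i, y j ∈ I := by
    intro i
    by_cases hd : 2 ≤ d
    · obtain ⟨j, hj, hji⟩ : ∃ j : Fin d, (j : ℕ) < 2 ∧ j ≠ i := by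
        by_cases hi : (i : ℕ) = 0
        · exact ⟨⟨1, by omega⟩, by simp, fun h => by simp [← h] at hi⟩
        · exact ⟨⟨0, by omega⟩, by simp, fun h => by simp [← h] at hi⟩
      rw [← Finset.mul_prod_erase _ _ (Finset.mem_erase.2 ⟨hji, Finset.mem_univ j⟩)]
      exact Ideal.mul_mem_right _ _ (hyI j hj)
    · -- In dimension at most one no prime has height two, so `I` is the unit ideal.
      have : I = ⊤ := by
        by_contra hne
        have h := hIht (closedPoint R) (IsLocalRing.le_maximalIdeal hne)
        rw [hm] at h
        exact hd (by exact_mod_cast h)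
      rw [this]
      trivial
  have hrad : Q ≤ (Ideal.span (Set.range fun i => y i ^ 2)).radical := by
    rw [Ideal.radical_eq_sInf]
    refine le_sInf ?_
    rintro p ⟨hp, hpp⟩
    have hyp' : Ideal.span (Set.range y) ≤ p := by
      rw [Ideal.span_le]
      rintro _ ⟨i, rfl⟩
      exact hpp.mem_of_pow_mem 2 (hp (Ideal.subset_span ⟨i, rfl⟩))
    have hht := hyp ⟨p, hpp⟩ hyp'
    have hpm : (⟨p, hpp⟩ : PrimeSpectrum R) = closedPoint R := by
      by_contra hne
      have hle : (⟨p, hpp⟩ : PrimeSpectrum R) ≤ closedPoint R :=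
        IsLocalRing.le_maximalIdeal hpp.ne_top
      have h3 := Order.height_add_one_le (lt_of_le_of_ne hle hne)
      rw [hm] at h3
      have h4 : ((d + 1 : ℕ) : ℕ∞) ≤ d := by
        push_cast
        exact le_trans (by gcongr) h3
      have h5 : d + 1 ≤ d := by exact_mod_cast h4
      omega
    have : p = maximalIdeal R := congrArg PrimeSpectrum.asIdeal hpm
    rw [this, ← hz]
    exact Ideal.le_radical
  obtain ⟨K, hK⟩ := Ideal.exists_pow_le_of_le_radical_of_fg hrad (IsNoetherian.noetherian Q)
  have hzK : ∀ i, z i ^ (K + 1) ∈ Ideal.span (Set.range fun i => y i ^ 2) := fun i => by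
    rw [pow_succ]
    exact Ideal.mul_mem_right _ _
      (hK (Ideal.pow_mem_pow (Ideal.subset_span (Set.mem_range_self i)) K))
  obtain ⟨A, hA⟩ := exists_matrix z y hyQ
  obtain ⟨B, hB⟩ := exists_matrix (fun i => y i ^ 2) (fun i => z i ^ (K + 1)) hzK
  obtain ⟨s', hs'⟩ := det_smul_sum A z y hA s
  obtain ⟨t, ht⟩ := conductor_step hinj I hI y hprod (A.det * r) s' (by
    rw [map_mul, hr, ← Algebra.smul_def, hs'])
  obtain ⟨t', ht'⟩ := det_smul_sum B _ _ hB t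
  have hC : (B * (Matrix.diagonal y * A)) *ᵥ z = fun i => z i ^ (K + 1) := by
    rw [← Matrix.mulVec_mulVec, ← Matrix.mulVec_mulVec, hA, ← hB]
    congr 1
    ext i
    rw [Matrix.mulVec_diagonal, sq]
  have hD : Matrix.diagonal (fun i => z i ^ K) *ᵥ z = fun i => z i ^ (K + 1) := by
    ext i
    rw [Matrix.mulVec_diagonal, pow_succ]
  have hdet := det_sub_det_mem z _ _ _ hC hD
  rw [Matrix.det_mul, Matrix.det_mul, Matrix.det_diagonal, Matrix.det_diagonal] at hdet
  obtain ⟨c, hc⟩ := Ideal.mem_span_range_iff_exists_fun.1 hdet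
  simp only [smul_eq_mul] at ht'
  rw [← ht] at ht'
  simp only [Finset.prod_pow] at hc
  refine ⟨K, fun i => (∏ j ∈ Finset.univ.erase i, z j ^ (K + 1)) * t' i - c i * r, ?_⟩
  set Z := ∏ i, z i with hZ
  have e1 : Z ^ (2 * K + 1) * r =
      Z ^ (K + 1) * (B.det * ((∏ i, y i) * (A.det * r))) -
      (Z ^ (K + 1) * (B.det * ((∏ i, y i) * A.det) - Z ^ K)) * r := by ring
  rw [e1, ht', ← hc, Finset.mul_sum, Finset.sum_mul, ← Finset.sum_sub_distrib]
  refine Finset.sum_congr rfl fun i _ => ?_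
  have e2 : Z ^ (K + 1) = z i ^ (K + 1) * ∏ j ∈ Finset.univ.erase i, z j ^ (K + 1) := by
    rw [Finset.mul_prod_erase _ (fun j => z j ^ (K + 1)) (Finset.mem_univ i), Finset.prod_pow]
  rw [e2]
  ring

/-- Let `(R, m)` be an unmixed Noetherian local ring of dimension `d` which is an image of a
Cohen–Macaulay local ring, `x = x₁, …, x_d` a system of parameters of `R`, and `S` an
`S₂`-ification of `R`: a subring of the total quotient ring of `R` containing `R` which is
module-finite over `R`, satisfies Serre's condition `S₂` as an `R`-module, and is such that
`D(s)` has height at least two for every `s ∈ S \ R`.  Then `(x)^lim = (x)^lim_S ∩ R`. -/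
theorem limitClosure_eq_limitClosure_s2ification_inter
    {R : Type*} [CommRing R] [IsNoetherianRing R] [IsLocalRing R]
    {d : ℕ} (hdim : ringKrullDim R = d)
    (hunmixed : IsUnmixedLocalRing R)
    (A : Type*) [CommRing A] [IsNoetherianRing A] [IsLocalRing A]
    (hACM : IsCohenMacaulayRing A) (f : A →+* R) (hf : Function.Surjective f)
    (S : Subalgebra R (FractionRing R))
    (hfin : Module.Finite R S)
    (hS2 : HasSerreS2 R S)
    (hheight : ∀ s : FractionRing R, s ∈ S →
      s ∉ Set.range (algebraMap R (FractionRing R)) →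
      ∀ p : PrimeSpectrum R, denominatorIdeal R s ≤ p.asIdeal → 2 ≤ Order.height p)
    (x : Fin d → R) (hx : IsSOP R x) :
    limitClosure (M := R) x = (limitClosure (M := ↥S) x).comap (Algebra.linearMap R ↥S) := by
  have hinj : Function.Injective (algebraMap R S) := by
    intro a b hab
    exact IsFractionRing.injective R (FractionRing R) (congrArg Subtype.val hab)
  ext r
  rw [Submodule.mem_comap, mem_limitClosure, mem_limitClosure]
  constructor
  · rintro ⟨n, s, hs⟩
    refine ⟨n, fun i => algebraMap R S (s i), ?_⟩
    have := congrArg (Algebra.linearMap R S) hs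
    simpa only [map_smul, map_sum, Algebra.linearMap_apply] using this
  · rintro ⟨n, s, hs⟩
    obtain ⟨I, hI, hIht⟩ := exists_conductor S hfin hheight
    have hz : (Ideal.span (Set.range fun i => x i ^ (n + 2))).radical = maximalIdeal R := by
      rw [← hx.2]
      refine le_antisymm (Ideal.radical_mono ?_) ?_
      · rw [Ideal.span_le]
        rintro _ ⟨i, rfl⟩
        exact Ideal.pow_mem_of_mem _ (Ideal.subset_span (Set.mem_range_self i)) _ (by omega)
      · rw [Ideal.radical_le_radical_iff, Ideal.span_le]
        rintro _ ⟨i, rfl⟩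
        exact Ideal.mem_radical_of_pow_mem (m := n + 2)
          (Ideal.le_radical (Ideal.subset_span ⟨i, rfl⟩))
    obtain ⟨K, t, ht⟩ := descent hdim hinj I hI hIht (fun i => x i ^ (n + 2)) hz
      ((∏ i, x i) ^ (n + 1) * r) s (by
        rw [← hs, map_mul, ← Algebra.smul_def, Algebra.linearMap_apply])
    refine ⟨(n + 2) * (2 * K + 1) + n, t, ?_⟩
    simp only [smul_eq_mul]
    rw [Finset.prod_pow] at ht
    convert ht using 1
    · ring
    · refine Finset.sum_congr rfl fun i _ => ?_
      rw [← pow_mul]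
      rfl
end

section
/- Let K be a field of characteristic 0, let A = K[X, Y, U, V]/(f) where f = XY − UX² − VY², denote by x, y, u, v the images of X, Y, U, V, and let R = A_m be the localization of A at the maximal ideal m = (x, y, u, v). Then for all n ≥ 1, the limit closure of the system of parameters y^n, u^n, v^n of R satisfies (y^n, u^n, v^n)^lim = (y^n, u^n, v^n, x − yv·Σ_{i=0}^{n-2} C_i (uv)^i), where C_i is the i-th Catalan number (the sum being empty when n = 1). -/
/-!
Write `c_N = ∑_{i<N} Cᵢ (uv)ⁱ` for the truncated Catalan series. The Catalan recursion says that
`c_N = 1 + uv c_N² + O((uv)^N)`, so that `x = y v c_N` is an approximate root of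
`f = xy - ux² - vy²` (`catalan_trunc`).

*The right-hand side lies in the limit closure* (`key_mem`). With `z = x - y v c_n`, the
factorization `f ≡ z (y (1 - uv c_n) - ux)` modulo `(uv)ⁿ` gives `y z ≡ u (x c_n z)` modulo
`uⁿ`, hence `yⁿ z ∈ (uⁿ)` and `(yuv)ⁿ z ∈ (u²ⁿ)`. Replacing `c_n` by `c_{n-1}` changes `z` by a
multiple of `vⁿ` only.

*The limit closure lies in the right-hand side* (`upper`). For each `M`, sending `x` to
`y v c_M` defines a ring map from `A` to `K[Y,U,V]/(Y^M,U^M,V^M)`. It maps `m` to nilpotents, so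
it extends to `R = A_m` (`exists_lift`). If `(yuv)^m b` lies in `(y^M,u^M,v^M)` with `M = n + m`,
comparing monomials (`mem_of_mul_mem`) shows that `b(y v c_M, y, u, v)` lies in `(Yⁿ,Uⁿ,Vⁿ)`
already in `K[Y,U,V]`. Mapping back to `R`, where `x ≡ y v c_M` modulo the right-hand side, yields
the claim.
-/

open IsLocalRing

set_option synthInstance.maxHeartbeats 1000000
set_option maxHeartbeats 1000000

/-- The polynomial `f = XY − UX² − VY²` in `K[X, Y, U, V]`, the variables `X, Y, U, V` being
indexed by `0, 1, 2, 3 : Fin 4`. -/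
noncomputable def fpoly (K : Type*) [Field K] : MvPolynomial (Fin 4) K :=
  MvPolynomial.X 0 * MvPolynomial.X 1 - MvPolynomial.X 2 * MvPolynomial.X 0 ^ 2 -
    MvPolynomial.X 3 * MvPolynomial.X 1 ^ 2

/-- The ring `A = K[X, Y, U, V]/(f)`. -/
abbrev Aring (K : Type*) [Field K] := MvPolynomial (Fin 4) K ⧸ Ideal.span {fpoly K}

/-- The images `x, y, u, v` of `X, Y, U, V` in `A = K[X, Y, U, V]/(f)`. -/
noncomputable def xA (K : Type*) [Field K] (i : Fin 4) : Aring K :=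
  Ideal.Quotient.mk (Ideal.span {fpoly K}) (MvPolynomial.X i)

/-- The maximal ideal `m = (x, y, u, v)` of `A`. -/
noncomputable def mA (K : Type*) [Field K] : Ideal (Aring K) :=
  Ideal.span {xA K 0, xA K 1, xA K 2, xA K 3}

/-! ### Truncated Catalan series -/

/-- The truncation `∑_{i<N} Cᵢ tⁱ` of the Catalan generating series, evaluated at `t`. -/
def catSum {R : Type*} [CommRing R] (N : ℕ) (t : R) : R :=
  ∑ i ∈ Finset.range N, (catalan i : R) * t ^ i

lemma map_catSum {R S : Type*} [CommRing R] [CommRing S] (g : R →+* S) (N : ℕ) (t : R) :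
    g (catSum N t) = catSum N (g t) := by
  simp [catSum]

lemma catSum_sub {R : Type*} [CommRing R] {N N' : ℕ} (h : N ≤ N') (t : R) :
    t ^ N ∣ catSum N' t - catSum N t := by
  obtain ⟨d, rfl⟩ := Nat.exists_eq_add_of_le h
  rw [catSum, catSum, Finset.sum_range_add, add_sub_cancel_left]
  exact Finset.dvd_sum fun i _ => ⟨(catalan (N + i) : R) * t ^ i, by ring⟩

/-- The truncated Catalan series satisfies `c = 1 + t c²` up to a multiple of `t ^ N`: in degrees
below `N` this is the Catalan recursion. -/
lemma catalan_trunc {R : Type*} [CommRing R] (N : ℕ) (t : R) :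
    t ^ N ∣ catSum N t - 1 - t * catSum N t ^ 2 := by
  let P : Polynomial ℤ := catSum N Polynomial.X
  suffices h : Polynomial.X ^ N ∣ P - 1 - Polynomial.X * P ^ 2 by
    have := map_dvd (Polynomial.eval₂RingHom (Int.castRingHom R) t) h
    simpa only [P, map_sub, map_mul, map_pow, map_one, map_catSum, Polynomial.coe_eval₂RingHom,
      Polynomial.eval₂_X] using this
  have hc : ∀ d < N, P.coeff d = catalan d := by
    intro d hd
    have : ∀ i d, ((catalan i : Polynomial ℤ) * Polynomial.X ^ i).coeff d =
        if d = i then (catalan i : ℤ) else 0 := by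
      intro i d
      rw [← Polynomial.C_eq_natCast, Polynomial.coeff_C_mul_X_pow]
    simp only [P, catSum, Polynomial.finsetSum_coeff, this]
    simp [hd]
  rw [Polynomial.X_pow_dvd_iff]
  intro d hd
  rcases d with _ | d
  · simp [hc 0 hd]
  · rw [Polynomial.coeff_sub, Polynomial.coeff_sub, Polynomial.coeff_X_mul, hc _ hd, sq,
      Polynomial.coeff_mul, catalan_succ', Polynomial.coeff_one]
    simp only [Nat.add_eq_zero_iff, one_ne_zero, and_false, if_false, Nat.cast_sum, sub_zero]
    rw [sub_eq_zero]
    refine Finset.sum_congr rfl fun ij hij => ?_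
    have := Finset.HasAntidiagonal.mem_antidiagonal.mp hij
    rw [hc _ (by omega), hc _ (by omega), Nat.cast_mul]

/-! ### The generators lie in the limit closure -/

/-- Iterating `y z ≡ u w z` modulo `u ^ N` gives `y ^ k z ∈ (u ^ k)` for `k ≤ N`. -/
lemma pow_dvd_of_step {R : Type*} [CommRing R] {y u z w : R} {N : ℕ}
    (h : u ^ N ∣ y * z - u * w * z) (k : ℕ) : k ≤ N → u ^ k ∣ y ^ k * z := by
  intro hk
  have h1 : y * z - u * w * z ∣ y ^ k * z - (u * w) ^ k * z := by
    have := mul_dvd_mul_right (sub_dvd_pow_sub_pow y (u * w) k) z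
    simpa [sub_mul] using this
  have h2 : u ^ k ∣ y ^ k * z - (u * w) ^ k * z := ((pow_dvd_pow u hk).trans h).trans h1
  rw [mul_pow] at h2
  have h3 : u ^ k ∣ u ^ k * w ^ k * z := ⟨w ^ k * z, by ring⟩
  simpa using dvd_add h2 h3

/-- The generator `x - y v c_{n-1}(uv)` belongs to the limit closure of `yⁿ, uⁿ, vⁿ` in any ring
where `f = 0`, already with exponent `1` in the defining union. -/
lemma key_mem {R : Type*} [CommRing R] (x y u v : R) (hf : x * y - u * x ^ 2 - v * y ^ 2 = 0)
    (n : ℕ) (hn : 1 ≤ n) :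
    y ^ n * u ^ n * v ^ n * (x - y * v * catSum (n - 1) (u * v)) ∈
      Ideal.span {u ^ (2 * n), v ^ (2 * n)} := by
  set c := catSum n (u * v) with hc
  obtain ⟨e, he⟩ := catalan_trunc n (u * v)
  rw [← hc] at he
  obtain ⟨d, hd⟩ := catSum_sub (Nat.sub_le n 1) (u * v)
  rw [← hc] at hd
  have hstep : u ^ n ∣ y * (x - y * v * c) - u * (x * c) * (x - y * v * c) := by
    -- `c (1 - uvc) = 1 + (uv)ⁿ e`, and `f = z (y (1 - uvc) - ux) + y² v (uv)ⁿ e`.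
    refine ⟨- v ^ n * e * (y ^ 2 * v * c + y * (x - y * v * c)), ?_⟩
    rw [mul_pow] at he
    linear_combination c * hf - (y ^ 2 * v * c + y * (x - y * v * c)) * he
  obtain ⟨q, hq⟩ := pow_dvd_of_step hstep n le_rfl
  have hv : v * (u * v) ^ (n - 1) = u ^ (n - 1) * v ^ n := by
    obtain ⟨m, rfl⟩ := Nat.exists_eq_add_of_le hn
    simp only [Nat.add_sub_cancel_left]; ring
  rw [Ideal.mem_span_pair]
  refine ⟨v ^ n * q, y ^ n * u ^ n * y * u ^ (n - 1) * d, ?_⟩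
  linear_combination - u ^ n * v ^ n * hq - y ^ n * u ^ n * v ^ n * y * v * hd
    - y ^ n * u ^ n * v ^ n * y * d * hv

/-! ### Bounding the limit closure from above -/

open MvPolynomial in
/-- In a polynomial ring the powers of the variables generate a limit-closed ideal. -/
lemma mem_of_mul_mem {K : Type*} [Field K] (n m : ℕ) (p : MvPolynomial (Fin 3) K)
    (h : p * (X 0 * X 1 * X 2) ^ m ∈
      Ideal.span (Set.range fun i : Fin 3 => (X i : MvPolynomial (Fin 3) K) ^ (n + m))) :
    p ∈ Ideal.span (Set.range fun i : Fin 3 => (X i : MvPolynomial (Fin 3) K) ^ n) := by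
  have hs : ∀ k : ℕ, (Set.range fun i : Fin 3 => (X i : MvPolynomial (Fin 3) K) ^ k) =
      (fun s => monomial s 1) '' (Set.range fun i : Fin 3 => Finsupp.single i k) := by
    intro k
    rw [← Set.range_comp]
    congr 1
    funext i
    simp [X_pow_eq_monomial]
  have hm : ((X 0 * X 1 * X 2 : MvPolynomial (Fin 3) K)) ^ m =
      monomial (Finsupp.single 0 m + Finsupp.single 1 m + Finsupp.single 2 m) 1 := by
    simp [mul_pow, X_pow_eq_monomial, monomial_mul]
  rw [hs, mem_ideal_span_monomial_image] at h ⊢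
  rw [hm] at h
  intro a ha
  obtain ⟨_, ⟨i, rfl⟩, hi⟩ := h
    (a + (Finsupp.single 0 m + Finsupp.single 1 m + Finsupp.single 2 m)) (by
      rw [mem_support_iff, coeff_mul_monomial]
      simpa using ha)
  refine ⟨_, ⟨i, rfl⟩, ?_⟩
  rw [Finsupp.single_le_iff] at hi ⊢
  fin_cases i <;> simp at hi ⊢ <;> omega

section Localization

variable (K : Type*) [Field K]

/-- Every element of `A` is a constant modulo `m`. -/
lemma exists_sub_const_mem (a : Aring K) :
    ∃ c : K, a - Ideal.Quotient.mk _ (MvPolynomial.C c) ∈ mA K := by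
  obtain ⟨p, rfl⟩ := Ideal.Quotient.mk_surjective a
  induction p using MvPolynomial.induction_on with
  | C c => exact ⟨c, by simp⟩
  | add p q hp hq =>
    obtain ⟨c, hc⟩ := hp
    obtain ⟨d, hd⟩ := hq
    refine ⟨c + d, ?_⟩
    convert add_mem hc hd using 1
    simp only [map_add]; ring
  | mul_X p i hp =>
    refine ⟨0, ?_⟩
    have hx : xA K i ∈ mA K := Ideal.subset_span (by fin_cases i <;> simp)
    rw [map_zero, map_zero, sub_zero, map_mul]
    exact Ideal.mul_mem_left _ (Ideal.Quotient.mk _ p) hx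

lemma xA_rel : xA K 0 * xA K 1 - xA K 2 * xA K 0 ^ 2 - xA K 3 * xA K 1 ^ 2 = 0 := by
  have : Ideal.Quotient.mk (Ideal.span {fpoly K}) (fpoly K) = 0 :=
    Ideal.Quotient.eq_zero_iff_mem.mpr (Ideal.mem_span_singleton_self _)
  exact this

open MvPolynomial in
/-- The point `(Y V c_M(UV), Y, U, V)` with coordinates in `K[Y, U, V]`; it lies on `f = 0` modulo
`U ^ M`. -/
noncomputable def pt (M : ℕ) : Fin 4 → MvPolynomial (Fin 3) K :=
  ![X 0 * X 2 * catSum M (X 1 * X 2), X 0, X 1, X 2]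

/-- The ideal `(Y ^ M, U ^ M, V ^ M)` of `K[Y, U, V]`. -/
noncomputable def powIdeal (M : ℕ) : Ideal (MvPolynomial (Fin 3) K) :=
  Ideal.span (Set.range fun i : Fin 3 => (MvPolynomial.X i : MvPolynomial (Fin 3) K) ^ M)

lemma fpoly_pt (M : ℕ) :
    MvPolynomial.aeval (pt K M) (fpoly K) ∈ powIdeal K M := by
  obtain ⟨e, he⟩ := catalan_trunc M
    (MvPolynomial.X 1 * MvPolynomial.X 2 : MvPolynomial (Fin 3) K)
  have hu : (MvPolynomial.X 1 : MvPolynomial (Fin 3) K) ^ M ∈ powIdeal K M :=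
    Ideal.subset_span ⟨1, rfl⟩
  convert Ideal.mul_mem_left _
    (MvPolynomial.X 0 ^ 2 * MvPolynomial.X 2 * MvPolynomial.X 2 ^ M * e) hu using 1
  simp only [fpoly, map_sub, map_mul, map_pow, MvPolynomial.aeval_X, pt]
  simp only [Matrix.cons_val]
  rw [mul_pow] at he
  linear_combination (MvPolynomial.X 0 ^ 2 * MvPolynomial.X 2) * he

/-- Evaluation at the point `pt K M` defines a ring homomorphism from the localization of `A`
at `m`. -/
lemma exists_lift [hm : (mA K).IsPrime] (R : Type*) [CommRing R] [Algebra (Aring K) R]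
    [IsLocalization.AtPrime R (mA K)] (M : ℕ) :
    ∃ g : R →+* (MvPolynomial (Fin 3) K ⧸ powIdeal K M),
      ∀ p : MvPolynomial (Fin 4) K,
        g (algebraMap (Aring K) _ (Ideal.Quotient.mk _ p)) =
          Ideal.Quotient.mk _ (MvPolynomial.aeval (pt K M) p) := by
  let φ : Aring K →+* (MvPolynomial (Fin 3) K ⧸ powIdeal K M) :=
    Ideal.Quotient.lift (Ideal.span {fpoly K})
      ((Ideal.Quotient.mk (powIdeal K M)).comp (MvPolynomial.aeval (pt K M)).toRingHom) (by
        intro a ha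
        obtain ⟨b, rfl⟩ := Ideal.mem_span_singleton.mp ha
        have := fpoly_pt K M
        rw [RingHom.comp_apply, Ideal.Quotient.eq_zero_iff_mem]
        simpa using Ideal.mul_mem_right _ _ this)
  have hφ : ∀ p, φ (Ideal.Quotient.mk _ p) =
      Ideal.Quotient.mk _ (MvPolynomial.aeval (pt K M) p) := fun p => rfl
  have hX : ∀ i : Fin 3, IsNilpotent (Ideal.Quotient.mk (powIdeal K M) (MvPolynomial.X i)) :=
    fun i => ⟨M, by
      rw [← map_pow, Ideal.Quotient.eq_zero_iff_mem]
      exact Ideal.subset_span ⟨i, rfl⟩⟩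
  have hnil : mA K ≤ (nilradical _).comap φ := by
    rw [mA, Ideal.span_le]
    intro a ha
    simp only [Set.mem_insert_iff, Set.mem_singleton_iff] at ha
    change IsNilpotent (φ a)
    rcases ha with rfl | rfl | rfl | rfl <;> rw [xA, hφ, MvPolynomial.aeval_X]
    · simp only [pt, Matrix.cons_val_zero, map_mul, mul_assoc]
      exact (Commute.all _ _).isNilpotent_mul_right (hX 0)
    · exact hX 0
    · exact hX 1
    · exact hX 2
  have hunit : ∀ s : (mA K).primeCompl, IsUnit (φ s) := by
    rintro ⟨s, hs⟩
    obtain ⟨c, hc⟩ := exists_sub_const_mem K s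
    have hc0 : c ≠ 0 := by
      rintro rfl
      exact hs (by simpa using hc)
    have h1 : IsUnit (φ (Ideal.Quotient.mk _ (MvPolynomial.C c))) :=
      ((hc0.isUnit.map MvPolynomial.C).map (Ideal.Quotient.mk (Ideal.span {fpoly K}))).map φ
    have h2 : IsNilpotent (φ (s - Ideal.Quotient.mk _ (MvPolynomial.C c))) := hnil hc
    have h3 := h2.isUnit_add_left_of_commute h1 (Commute.all _ _)
    rw [← map_add, add_sub_cancel] at h3
    exact h3
  refine ⟨IsLocalization.lift hunit, fun p => ?_⟩
  rw [IsLocalization.lift_eq, hφ]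

/-- If `(yuv)^m a` lies in `(y^(n+m), u^(n+m), v^(n+m))` then `a` lies in every ideal containing
`yⁿ, uⁿ, vⁿ` and `x - y v c_{n-1}(uv)`. -/
lemma upper [hm : (mA K).IsPrime] (R : Type*) [CommRing R] [Algebra (Aring K) R]
    [IsLocalization.AtPrime R (mA K)] (n m : ℕ) (hn : 1 ≤ n)
    (J : Ideal R) (t : Fin 4 → R)
    (ht : ∀ i, t i = algebraMap (Aring K) _ (xA K i))
    (hy : t 1 ^ n ∈ J) (hu : t 2 ^ n ∈ J) (hv : t 3 ^ n ∈ J)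
    (hx : t 0 - t 1 * t 3 * catSum (n - 1) (t 2 * t 3) ∈ J)
    (a : R)
    (ha : (t 1 * t 2 * t 3) ^ m * a ∈
      Ideal.span {t 1 ^ (n + m), t 2 ^ (n + m), t 3 ^ (n + m)}) : a ∈ J := by
  obtain ⟨b, s, rfl⟩ := IsLocalization.exists_mk'_eq (mA K).primeCompl a
  have hb : algebraMap (Aring K) R b =
      IsLocalization.mk' R b s *
        algebraMap (Aring K) R s :=
    (IsLocalization.mk'_spec _ b s).symm
  have hsu : IsUnit (algebraMap (Aring K) R s) :=
    IsLocalization.map_units _ s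
  rw [← Ideal.mul_unit_mem_iff_mem J hsu, ← hb]
  replace ha : (t 1 * t 2 * t 3) ^ m * algebraMap (Aring K) _ b ∈
      Ideal.span {t 1 ^ (n + m), t 2 ^ (n + m), t 3 ^ (n + m)} := by
    rw [hb, ← mul_assoc]
    exact Ideal.mul_mem_right _ _ ha
  obtain ⟨p, rfl⟩ := Ideal.Quotient.mk_surjective b
  obtain ⟨g, hg⟩ := exists_lift K R (n + m)
  have hgt : ∀ i, g (t i) = Ideal.Quotient.mk _ (pt K (n + m) i) := by
    intro i
    rw [ht, xA, hg, MvPolynomial.aeval_X]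
  have hp1 : pt K (n + m) 1 = MvPolynomial.X 0 := rfl
  have hp2 : pt K (n + m) 2 = MvPolynomial.X 1 := rfl
  have hp3 : pt K (n + m) 3 = MvPolynomial.X 2 := rfl
  have hker : Ideal.span {t 1 ^ (n + m), t 2 ^ (n + m), t 3 ^ (n + m)} ≤ RingHom.ker g := by
    rw [Ideal.span_le]
    rintro _ (rfl | rfl | rfl) <;> rw [SetLike.mem_coe, RingHom.mem_ker, map_pow, hgt, ← map_pow,
      Ideal.Quotient.eq_zero_iff_mem]
    exacts [Ideal.subset_span ⟨0, rfl⟩, Ideal.subset_span ⟨1, rfl⟩, Ideal.subset_span ⟨2, rfl⟩]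
  have h0 := hker ha
  rw [RingHom.mem_ker, map_mul, map_pow, map_mul, map_mul, hgt, hgt, hgt, hg, ← map_mul, ← map_mul,
    ← map_pow, ← map_mul, Ideal.Quotient.eq_zero_iff_mem, hp1, hp2, hp3, mul_comm] at h0
  have h1 := mem_of_mul_mem n m _ h0
  let α : MvPolynomial (Fin 4) K →+* (R ⧸ J) :=
    ((Ideal.Quotient.mk J).comp (algebraMap (Aring K) R)).comp
      (Ideal.Quotient.mk (Ideal.span {fpoly K}))
  -- The map `K[Y, U, V] → R / J`, under which the point `pt` becomes the image of `(x, y, u, v)`.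
  let ψ : MvPolynomial (Fin 3) K →+* (R ⧸ J) :=
    MvPolynomial.eval₂Hom (α.comp MvPolynomial.C)
      ![Ideal.Quotient.mk J (t 1), Ideal.Quotient.mk J (t 2), Ideal.Quotient.mk J (t 3)]
  have hψ0 : ψ (MvPolynomial.X 0) = Ideal.Quotient.mk J (t 1) := MvPolynomial.eval₂Hom_X' _ _ _
  have hψ1 : ψ (MvPolynomial.X 1) = Ideal.Quotient.mk J (t 2) := MvPolynomial.eval₂Hom_X' _ _ _
  have hψ2 : ψ (MvPolynomial.X 2) = Ideal.Quotient.mk J (t 3) := MvPolynomial.eval₂Hom_X' _ _ _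
  have h2 : ψ (MvPolynomial.aeval (pt K (n + m)) p) = 0 := by
    have : Ideal.span (Set.range fun i : Fin 3 =>
        (MvPolynomial.X i : MvPolynomial (Fin 3) K) ^ n) ≤ RingHom.ker ψ := by
      rw [Ideal.span_le]
      rintro _ ⟨i, rfl⟩
      rw [SetLike.mem_coe, RingHom.mem_ker, map_pow]
      fin_cases i
      · exact (congrArg (· ^ n) hψ0).trans (Ideal.Quotient.eq_zero_iff_mem.mpr hy)
      · exact (congrArg (· ^ n) hψ1).trans (Ideal.Quotient.eq_zero_iff_mem.mpr hu)
      · exact (congrArg (· ^ n) hψ2).trans (Ideal.Quotient.eq_zero_iff_mem.mpr hv)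
    exact this h1
  have hx' : t 1 * t 3 * catSum (n + m) (t 2 * t 3) - t 0 ∈ J := by
    obtain ⟨d, hd⟩ := catSum_sub (show n - 1 ≤ n + m by omega) (t 2 * t 3)
    have hvv : t 3 * (t 2 * t 3) ^ (n - 1) = t 2 ^ (n - 1) * t 3 ^ n := by
      obtain ⟨l, rfl⟩ := Nat.exists_eq_add_of_le hn
      simp only [Nat.add_sub_cancel_left]; ring
    convert sub_mem (Ideal.mul_mem_left _ (t 1 * t 2 ^ (n - 1) * d) hv) hx using 1
    linear_combination t 1 * t 3 * hd + t 1 * d * hvv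
  have hψpt : ∀ i, ψ (pt K (n + m) i) = Ideal.Quotient.mk J (t i) := by
    intro i
    fin_cases i
    · change ψ (MvPolynomial.X 0 * MvPolynomial.X 2 *
        catSum (n + m) (MvPolynomial.X 1 * MvPolynomial.X 2)) = _
      rw [map_mul, map_mul, map_catSum, map_mul, hψ0, hψ1, hψ2, ← map_mul, ← map_mul,
        ← map_catSum, ← map_mul]
      exact Ideal.Quotient.eq.mpr hx'
    · exact hψ0
    · exact hψ1
    · exact hψ2
  rw [← Ideal.Quotient.eq_zero_iff_mem, ← h2]
  have hα : α = ψ.comp (MvPolynomial.aeval (pt K (n + m))).toRingHom := by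
    apply MvPolynomial.ringHom_ext
    · intro r
      simp [ψ, MvPolynomial.algebraMap_eq]
    · intro i
      simp only [RingHom.comp_apply, AlgHom.toRingHom_eq_coe, RingHom.coe_coe,
        MvPolynomial.aeval_X, hψpt, ht]
      rfl
  exact DFunLike.congr_fun hα p

/-- The theorem for an arbitrary model `R` of the localization of `A` at `m`. -/
lemma limitClosure_eq [hm : (mA K).IsPrime] (R : Type*) [CommRing R] [Algebra (Aring K) R]
    [IsLocalization.AtPrime R (mA K)] (n : ℕ) (hn : 1 ≤ n) (t : Fin 4 → R)
    (ht : ∀ i, t i = algebraMap (Aring K) _ (xA K i)) :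
    limitClosure (M := R) ![t 1 ^ n, t 2 ^ n, t 3 ^ n] =
      Ideal.span {t 1 ^ n, t 2 ^ n, t 3 ^ n, t 0 - t 1 * t 3 * catSum (n - 1) (t 2 * t 3)} := by
  have hrel : t 0 * t 1 - t 2 * t 0 ^ 2 - t 3 * t 1 ^ 2 = 0 := by
    simp only [ht]
    simpa only [map_sub, map_mul, map_pow, map_zero] using
      congrArg (algebraMap (Aring K) R) (xA_rel K)
  have hmem : ∀ (k : ℕ) (a : R),
      a ∈ (Ideal.span (Set.range fun i => (![t 1 ^ n, t 2 ^ n, t 3 ^ n] : Fin 3 → _) i ^ (k + 2)) •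
        (⊤ : Submodule R R)).comap
        (LinearMap.lsmul _ _ ((∏ i, (![t 1 ^ n, t 2 ^ n, t 3 ^ n] : Fin 3 → _) i) ^ (k + 1))) ↔
      (t 1 * t 2 * t 3) ^ (n * (k + 1)) * a ∈
        Ideal.span {t 1 ^ (n + n * (k + 1)), t 2 ^ (n + n * (k + 1)), t 3 ^ (n + n * (k + 1))} := by
    intro k a
    have hset : (Set.range fun i => (![t 1 ^ n, t 2 ^ n, t 3 ^ n] : Fin 3 → _) i ^ (k + 2)) =
        {t 1 ^ (n + n * (k + 1)), t 2 ^ (n + n * (k + 1)), t 3 ^ (n + n * (k + 1))} := by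
      have he : n * (k + 2) = n + n * (k + 1) := by ring
      ext z
      simp [Fin.exists_fin_succ, ← pow_mul, he, eq_comm]
    have hprod : (∏ i, (![t 1 ^ n, t 2 ^ n, t 3 ^ n] : Fin 3 → _) i) ^ (k + 1) =
        (t 1 * t 2 * t 3) ^ (n * (k + 1)) := by
      simp [Fin.prod_univ_three, pow_mul, mul_pow]
    rw [Submodule.mem_comap, hset, hprod, LinearMap.lsmul_apply, Ideal.smul_eq_mul, Ideal.mul_top,
      smul_eq_mul]
  apply le_antisymm
  · refine iSup_le fun k a ha => ?_
    exact upper K R n (n * (k + 1)) hn _ t ht (Ideal.subset_span (by simp))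
      (Ideal.subset_span (by simp)) (Ideal.subset_span (by simp)) (Ideal.subset_span (by simp)) a
      ((hmem k a).mp ha)
  · -- The member of the union with exponent `1` already contains all four generators.
    refine le_trans ?_ (le_iSup _ 0)
    rw [Ideal.span_le]
    have h1 : t 1 ^ (2 * n) ∈ Ideal.span {t 1 ^ (2 * n), t 2 ^ (2 * n), t 3 ^ (2 * n)} :=
      Ideal.subset_span (by simp)
    have h2 : t 2 ^ (2 * n) ∈ Ideal.span {t 1 ^ (2 * n), t 2 ^ (2 * n), t 3 ^ (2 * n)} :=
      Ideal.subset_span (by simp)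
    have h3 : t 3 ^ (2 * n) ∈ Ideal.span {t 1 ^ (2 * n), t 2 ^ (2 * n), t 3 ^ (2 * n)} :=
      Ideal.subset_span (by simp)
    intro a ha
    refine (hmem 0 a).mpr ?_
    rw [zero_add, mul_one, ← two_mul]
    rcases ha with rfl | rfl | rfl | rfl
    · convert Ideal.mul_mem_left _ (t 2 ^ n * t 3 ^ n) h1 using 1; ring
    · convert Ideal.mul_mem_left _ (t 1 ^ n * t 3 ^ n) h2 using 1; ring
    · convert Ideal.mul_mem_left _ (t 1 ^ n * t 2 ^ n) h3 using 1; ring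
    · rw [mul_pow, mul_pow]
      refine Ideal.span_mono ?_ (key_mem _ _ _ _ hrel n hn)
      intro z hz
      exact Or.inr hz

end Localization

/-- Let `K` be a field of characteristic `0`, `A = K[X, Y, U, V]/(XY − UX² − VY²)` with
`x, y, u, v` the images of the variables, and `R = A_m` the localization of `A` at
`m = (x, y, u, v)`.  Then for all `n ≥ 1`,
`(yⁿ, uⁿ, vⁿ)^lim = (yⁿ, uⁿ, vⁿ, x − yv·Σ_{i=0}^{n-2} Cᵢ(uv)ⁱ)` in `R`, where `Cᵢ` is the
`i`-th Catalan number. -/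
theorem limitClosure_catalan_example
    (K : Type*) [Field K] [CharZero K] [hm : (mA K).IsPrime] :
    ∀ n : ℕ, 1 ≤ n →
      limitClosure (M := Localization.AtPrime (mA K))
          ![algebraMap (Aring K) (Localization.AtPrime (mA K)) (xA K 1) ^ n,
            algebraMap (Aring K) (Localization.AtPrime (mA K)) (xA K 2) ^ n,
            algebraMap (Aring K) (Localization.AtPrime (mA K)) (xA K 3) ^ n] =
        Ideal.span
          {algebraMap (Aring K) (Localization.AtPrime (mA K)) (xA K 1) ^ n,
           algebraMap (Aring K) (Localization.AtPrime (mA K)) (xA K 2) ^ n,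
           algebraMap (Aring K) (Localization.AtPrime (mA K)) (xA K 3) ^ n,
           algebraMap (Aring K) (Localization.AtPrime (mA K)) (xA K 0) -
             algebraMap (Aring K) (Localization.AtPrime (mA K)) (xA K 1) *
               algebraMap (Aring K) (Localization.AtPrime (mA K)) (xA K 3) *
               ∑ i ∈ Finset.range (n - 1),
                 (catalan i : Localization.AtPrime (mA K)) *
                   (algebraMap (Aring K) (Localization.AtPrime (mA K)) (xA K 2) *
                     algebraMap (Aring K) (Localization.AtPrime (mA K)) (xA K 3)) ^ i} := by
  intro n hn
  exact limitClosure_eq K (Localization.AtPrime (mA K)) n hn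
    (fun i => algebraMap (Aring K) _ (xA K i)) (fun _ => rfl)
end
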